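/- Fix integers n ≥ 1 and k with 1 ≤ k ≤ n, let x̃ ∈ ℝⁿ be k-sparse nonnegative, σ > 0 and C > 0. Then the map (g, h) ↦ ξ_up(σ, g, h, x̃, C) is Lipschitz on ℝᵐ × ℝⁿ with constant √(2·C² + σ²); that is, for all g⁽¹⁾, g⁽²⁾ ∈ ℝᵐ and h⁽¹⁾, h⁽²⁾ ∈ ℝⁿ: |ξ_up(σ, g⁽²⁾, h⁽²⁾, x̃, C) − ξ_up(σ, g⁽¹⁾, h⁽¹⁾, x̃, C)| ≤ √(2·C² + σ²)·√(‖g⁽²⁾ − g⁽¹⁾‖₂² + ‖h⁽²⁾ − h⁽¹⁾‖₂²). -/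

import Mathlib

noncomputable def e2norm {d : ℕ} (x : Fin d → ℝ) : ℝ := Real.sqrt (∑ i, x i ^ 2)

def kSparseNonneg (n k : ℕ) (x : Fin n → ℝ) : Prop :=
  (∀ i : Fin n, (i : ℕ) < n - k → x i = 0) ∧ ∀ i, 0 ≤ x i

noncomputable def tailSum {n : ℕ} (k : ℕ) (lam x : Fin n → ℝ) : ℝ :=
  ∑ i ∈ Finset.univ.filter (fun i : Fin n => n - k ≤ (i : ℕ)), lam i * x i

/-- ξ_up(σ, g, h, x̃, C), the optimal value of the dual maximization (2.61). -/
noncomputable def xiUpFun (m n k : ℕ) (σ C : ℝ) (xt : Fin n → ℝ)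
    (g : Fin m → ℝ) (h : Fin n → ℝ) : ℝ :=
  sSup {z : ℝ | ∃ ν : ℝ, ∃ lam : Fin n → ℝ, 0 ≤ ν ∧
    (∀ i, 0 ≤ lam i ∧ lam i ≤ 2 * ν) ∧
    z = Real.sqrt (C ^ 2 + σ ^ 2) * e2norm g
        - C * e2norm (fun i => h i + ν - lam i) - tailSum k lam xt}

/-!
For each fixed dual pair `(ν, λ)` the objective depends on `(g, h)` only through
`√(C² + σ²) ‖g‖` and `-C ‖h + ν 1 - λ‖`. By the reverse triangle inequality and Cauchy–Schwarz in
`ℝ²` it is Lipschitz in `(g, h)` with constant `√((C² + σ²) + C²)`, whatever `(ν, λ)` is, and a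
finite supremum of functions with a common Lipschitz constant has that Lipschitz constant.
-/

section Supremum

variable {ι α : Type*} [Nonempty ι] {f g : ι → α} {ε : α}

theorem ciSup_le_ciSup_add_of_le_add [ConditionallyCompleteLattice α] [Add α] [AddRightMono α]
    (hg : BddAbove (Set.range g)) (hfg : ∀ i, f i ≤ g i + ε) :
    ⨆ i, f i ≤ (⨆ i, g i) + ε :=
  ciSup_le fun i ↦ (hfg i).trans (by gcongr; exact le_ciSup hg i)

theorem abs_ciSup_sub_ciSup_le [ConditionallyCompleteLinearOrder α] [AddCommGroup α]
    [IsOrderedAddMonoid α] (hg : BddAbove (Set.range g)) (hfg : ∀ i, |f i - g i| ≤ ε) :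
    |(⨆ i, f i) - ⨆ i, g i| ≤ ε := by
  have hfg_le : ∀ i, f i ≤ g i + ε := fun i ↦ sub_le_iff_le_add'.1 (abs_sub_le_iff.1 (hfg i)).1
  have hgf_le : ∀ i, g i ≤ f i + ε := fun i ↦ sub_le_iff_le_add'.1 (abs_sub_le_iff.1 (hfg i)).2
  have hf : BddAbove (Set.range f) := by
    obtain ⟨b, hb⟩ := hg
    refine ⟨b + ε, Set.forall_mem_range.2 fun i ↦ (hfg_le i).trans ?_⟩
    gcongr
    exact hb (Set.mem_range_self i)
  exact abs_sub_le_iff.2 ⟨sub_le_iff_le_add'.2 (ciSup_le_ciSup_add_of_le_add hg hfg_le),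
    sub_le_iff_le_add'.2 (ciSup_le_ciSup_add_of_le_add hf hgf_le)⟩

end Supremum

theorem mul_add_mul_le_sqrt_mul_sqrt (a b x y : ℝ) :
    a * x + b * y ≤ √(a ^ 2 + b ^ 2) * √(x ^ 2 + y ^ 2) := by
  simpa using Real.sum_mul_le_sqrt_mul_sqrt Finset.univ ![a, b] ![x, y]

section Euclidean

variable {d : ℕ}

theorem e2norm_eq_norm_toLp (x : Fin d → ℝ) : e2norm x = ‖WithLp.toLp 2 x‖ := by
  simp [e2norm, EuclideanSpace.norm_eq]

theorem e2norm_nonneg (x : Fin d → ℝ) : 0 ≤ e2norm x :=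
  Real.sqrt_nonneg _

theorem abs_e2norm_sub_e2norm_le (x y : Fin d → ℝ) : |e2norm x - e2norm y| ≤ e2norm (x - y) := by
  simp only [e2norm_eq_norm_toLp, WithLp.toLp_sub]
  exact abs_norm_sub_norm_le _ _

end Euclidean

theorem tailSum_nonneg {n k : ℕ} {lam x : Fin n → ℝ} (hlam : ∀ i, 0 ≤ lam i)
    (hx : ∀ i, 0 ≤ x i) : 0 ≤ tailSum k lam x :=
  Finset.sum_nonneg fun i _ ↦ mul_nonneg (hlam i) (hx i)

/-- The constraint set of the maximization defining `xiUpFun`, as a set of pairs `(ν, λ)`. -/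
def dualFeasible (n : ℕ) : Set (ℝ × (Fin n → ℝ)) :=
  {p | 0 ≤ p.1 ∧ ∀ i, 0 ≤ p.2 i ∧ p.2 i ≤ 2 * p.1}

/-- The objective of the maximization defining `xiUpFun`, evaluated at the pair `p = (ν, λ)`. -/
noncomputable def xiUpObjective {m n : ℕ} (k : ℕ) (σ C : ℝ) (xt : Fin n → ℝ)
    (g : Fin m → ℝ) (h : Fin n → ℝ) (p : ℝ × (Fin n → ℝ)) : ℝ :=
  √(C ^ 2 + σ ^ 2) * e2norm g - C * e2norm (fun i ↦ h i + p.1 - p.2 i) - tailSum k p.2 xt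

instance nonempty_dualFeasible (n : ℕ) : Nonempty (dualFeasible n) :=
  ⟨0, le_rfl, by simp⟩

section XiUp

variable {m n k : ℕ} {σ C : ℝ} {xt : Fin n → ℝ}

theorem xiUpFun_eq_iSup (g : Fin m → ℝ) (h : Fin n → ℝ) :
    xiUpFun m n k σ C xt g h = ⨆ p : dualFeasible n, xiUpObjective k σ C xt g h p := by
  rw [iSup, xiUpFun]
  congr 1
  ext z
  simp [dualFeasible, xiUpObjective, and_assoc, eq_comm]

theorem bddAbove_range_xiUpObjective (hC : 0 ≤ C) (hxt : ∀ i, 0 ≤ xt i)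
    (g : Fin m → ℝ) (h : Fin n → ℝ) :
    BddAbove (Set.range fun p : dualFeasible n ↦ xiUpObjective k σ C xt g h p) := by
  refine ⟨√(C ^ 2 + σ ^ 2) * e2norm g, Set.forall_mem_range.2 ?_⟩
  rintro ⟨⟨ν, lam⟩, -, hlam⟩
  have hnorm : 0 ≤ C * e2norm (fun i ↦ h i + ν - lam i) := mul_nonneg hC (e2norm_nonneg _)
  have htail : 0 ≤ tailSum k lam xt := tailSum_nonneg (fun i ↦ (hlam i).1) hxt
  simp only [xiUpObjective]
  linarith

theorem abs_xiUpObjective_sub_le (g1 g2 : Fin m → ℝ) (h1 h2 : Fin n → ℝ)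
    (p : ℝ × (Fin n → ℝ)) :
    |xiUpObjective k σ C xt g2 h2 p - xiUpObjective k σ C xt g1 h1 p| ≤
      √(2 * C ^ 2 + σ ^ 2) * √(e2norm (g2 - g1) ^ 2 + e2norm (h2 - h1) ^ 2) := by
  set s := √(C ^ 2 + σ ^ 2) with hs
  let shift (h : Fin n → ℝ) : Fin n → ℝ := fun i ↦ h i + p.1 - p.2 i
  have hshift : shift h2 - shift h1 = h2 - h1 := by ext i; simp [shift]
  have hconst : s ^ 2 + |C| ^ 2 = 2 * C ^ 2 + σ ^ 2 := by
    rw [hs, Real.sq_sqrt (by positivity), sq_abs]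
    ring
  calc |xiUpObjective k σ C xt g2 h2 p - xiUpObjective k σ C xt g1 h1 p|
      = |s * (e2norm g2 - e2norm g1) - C * (e2norm (shift h2) - e2norm (shift h1))| := by
        congr 1
        simp only [xiUpObjective, shift, ← hs]
        ring
    _ ≤ s * |e2norm g2 - e2norm g1| + |C| * |e2norm (shift h2) - e2norm (shift h1)| := by
        refine (abs_sub _ _).trans_eq ?_
        rw [abs_mul, abs_mul, abs_of_nonneg (Real.sqrt_nonneg _)]
    _ ≤ s * e2norm (g2 - g1) + |C| * e2norm (h2 - h1) := by
        rw [← hshift]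
        gcongr <;> exact abs_e2norm_sub_e2norm_le _ _
    _ ≤ √(s ^ 2 + |C| ^ 2) * √(e2norm (g2 - g1) ^ 2 + e2norm (h2 - h1) ^ 2) :=
        mul_add_mul_le_sqrt_mul_sqrt _ _ _ _
    _ = √(2 * C ^ 2 + σ ^ 2) * √(e2norm (g2 - g1) ^ 2 + e2norm (h2 - h1) ^ 2) := by rw [hconst]

theorem lasso_stmt6_general {g1 : Fin m → ℝ} {h1 : Fin n → ℝ}
    (hbdd : BddAbove (Set.range fun p : dualFeasible n ↦ xiUpObjective k σ C xt g1 h1 p))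
    (g2 : Fin m → ℝ) (h2 : Fin n → ℝ) :
    |xiUpFun m n k σ C xt g2 h2 - xiUpFun m n k σ C xt g1 h1| ≤
      √(2 * C ^ 2 + σ ^ 2) * √(e2norm (g2 - g1) ^ 2 + e2norm (h2 - h1) ^ 2) := by
  simp only [xiUpFun_eq_iSup]
  exact abs_ciSup_sub_ciSup_le hbdd fun p ↦ abs_xiUpObjective_sub_le g1 g2 h1 h2 p

end XiUp

theorem lasso_stmt6 (m n k : ℕ) (hn : 1 ≤ n) (hk1 : 1 ≤ k) (hkn : k ≤ n)
    (xt : Fin n → ℝ) (hxt : kSparseNonneg n k xt)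
    (σ C : ℝ) (hσ : 0 < σ) (hC : 0 < C) :
    ∀ (g1 g2 : Fin m → ℝ) (h1 h2 : Fin n → ℝ),
      |xiUpFun m n k σ C xt g2 h2 - xiUpFun m n k σ C xt g1 h1|
        ≤ Real.sqrt (2 * C ^ 2 + σ ^ 2) *
            Real.sqrt (e2norm (g2 - g1) ^ 2 + e2norm (h2 - h1) ^ 2) :=
  fun g1 g2 h1 h2 ↦ lasso_stmt6_general
    (bddAbove_range_xiUpObjective hC.le hxt.2 g1 h1) g2 h2
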